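/- Let E be a real inner product space, let f : E → ℝ be differentiable with ψ-Lipschitz gradient (ψ > 0), and let f* ∈ ℝ and λ > 0 satisfy f(x) ≥ f* and ‖∇f(x)‖² ≥ λ·(f(x) − f*) for all x ∈ E. Let K, g ∈ E with ‖g − ∇f(K)‖² ≤ λ·(f(K) − f*)/6, let 0 < η ≤ 1/(4ψ), and set K⁺ := K − η·g. Then f(K⁺) − f* ≤ (1 − λη/8)·(f(K) − f*). -/

import Mathlib

/-!
Smoothness gives the descent lemma `f (x + v) ≤ f x + ⟪∇f x, v⟫ + ψ/2 ‖v‖²`. With `v = -η g`,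
`g = ∇f K + e` and `ψ η ≤ 1/4`, the change in `f` is at most
`η (-7/8 ‖∇f K‖² - 3/4 ⟪∇f K, e⟫ + 1/8 ‖e‖²) ≤ -η/2 (‖∇f K‖² - ‖e‖²)`, using
`-2 ⟪∇f K, e⟫ ≤ ‖∇f K‖² + ‖e‖²`. Gradient domination and the error bound
turn this into a decrease of `5/12 λ η` times the gap, which exceeds `λ η / 8` times the gap.
-/

/-- The descent lemma: along the segment, `f (x + t v) - t ⟪∇f x, v⟫ - ψ/2 t² ‖v‖²` has
nonpositive derivative because the gradient is `ψ`-Lipschitz. -/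
theorem descent_lemma
    {E : Type*} [NormedAddCommGroup E] [InnerProductSpace ℝ E] [CompleteSpace E]
    (f : E → ℝ) (gf : E → E) (hgrad : ∀ x, HasGradientAt f (gf x) x)
    (ψ : ℝ) (hLip : ∀ x y, ‖gf x - gf y‖ ≤ ψ * ‖x - y‖) (x v : E) :
    f (x + v) ≤ f x + inner ℝ (gf x) v + ψ / 2 * ‖v‖ ^ 2 := by
  have hd : ∀ t : ℝ, HasDerivAt
      (fun t : ℝ => f (x + t • v) - (t * inner ℝ (gf x) v + ψ / 2 * ‖v‖ ^ 2 * t ^ 2))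
      (inner ℝ (gf (x + t • v)) v - (inner ℝ (gf x) v + ψ * ‖v‖ ^ 2 * t)) t := by
    intro t
    have hline : HasDerivAt (fun t : ℝ => x + t • v) v t := by
      simpa using ((hasDerivAt_id t).smul_const v).const_add x
    have hf : HasDerivAt (fun t : ℝ => f (x + t • v)) (inner ℝ (gf (x + t • v)) v) t := by
      simpa [Function.comp_def] using (hgrad (x + t • v)).hasFDerivAt.comp_hasDerivAt t hline
    have hq : HasDerivAt
        (fun t : ℝ => t * inner ℝ (gf x) v + ψ / 2 * ‖v‖ ^ 2 * t ^ 2)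
        (inner ℝ (gf x) v + ψ * ‖v‖ ^ 2 * t) t := by
      refine (((hasDerivAt_id t).mul_const (inner ℝ (gf x) v)).add
        ((hasDerivAt_pow 2 t).const_mul (ψ / 2 * ‖v‖ ^ 2))).congr_deriv ?_
      norm_num
      ring
    exact hf.sub hq
  have hanti := antitoneOn_of_deriv_nonpos (convex_Icc (0 : ℝ) 1)
    (fun t _ => (hd t).continuousAt.continuousWithinAt)
    (fun t _ => (hd t).differentiableAt.differentiableWithinAt)
    (fun t ht => by
      rw [interior_Icc] at ht
      rw [(hd t).deriv]
      have h1 := real_inner_le_norm (gf (x + t • v) - gf x) v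
      have h2 := hLip (x + t • v) x
      rw [add_sub_cancel_left, norm_smul, Real.norm_of_nonneg ht.1.le] at h2
      have h3 := mul_le_mul_of_nonneg_right h2 (norm_nonneg v)
      rw [inner_sub_left] at h1
      nlinarith)
  have h := hanti (Set.left_mem_Icc.2 zero_le_one) (Set.right_mem_Icc.2 zero_le_one) zero_le_one
  norm_num at h
  linarith

/-- Per-step stability guarantee: if the squared gradient-estimation error is at most
one sixth of `λ` times the current optimality gap, then one inexact gradient step on
a gradient-dominated smooth objective contracts the gap by the factor `(1 - λη/8)`. -/
theorem pl_inexact_descent_stability_step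
    {E : Type*} [NormedAddCommGroup E] [InnerProductSpace ℝ E] [CompleteSpace E]
    (f : E → ℝ) (gf : E → E) (hgrad : ∀ x, HasGradientAt f (gf x) x)
    (ψ : ℝ) (hψ : 0 < ψ) (hLip : ∀ x y, ‖gf x - gf y‖ ≤ ψ * ‖x - y‖)
    (fstar : ℝ) (lam : ℝ) (hlam : 0 < lam)
    (hlb : ∀ x, fstar ≤ f x) (hPL : ∀ x, lam * (f x - fstar) ≤ ‖gf x‖ ^ 2)
    (K g : E) (herr : ‖g - gf K‖ ^ 2 ≤ lam * (f K - fstar) / 6)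
    (η : ℝ) (hη0 : 0 < η) (hη : η ≤ 1 / (4 * ψ)) :
    f (K - η • g) - fstar ≤ (1 - lam * η / 8) * (f K - fstar) := by
  have hdesc := descent_lemma f gf hgrad ψ hLip K (-(η • g))
  rw [← sub_eq_add_neg, inner_neg_right, inner_smul_right, norm_neg, norm_smul,
    Real.norm_of_nonneg hη0.le] at hdesc
  have hψη : ψ * η ≤ 1 / 4 := by
    rw [le_div_iff₀ (by positivity)] at hη
    linarith
  obtain ⟨e, rfl⟩ : ∃ e, g = gf K + e := ⟨g - gf K, by abel⟩
  rw [add_sub_cancel_left] at herr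
  have hquad : ψ / 2 * (η * ‖gf K + e‖) ^ 2 ≤ η / 8 * ‖gf K + e‖ ^ 2 := by
    have := mul_le_mul_of_nonneg_right hψη
      (show 0 ≤ η / 2 * ‖gf K + e‖ ^ 2 by positivity)
    linarith
  have hsq := norm_add_sq_real (gf K) e
  have hyoung : 0 ≤ ‖gf K‖ ^ 2 + 2 * inner ℝ (gf K) e + ‖e‖ ^ 2 :=
    hsq ▸ sq_nonneg ‖gf K + e‖
  rw [inner_add_right, real_inner_self_eq_norm_sq] at hdesc
  rw [hsq] at hquad
  have hgap : 0 ≤ lam * (f K - fstar) := mul_nonneg hlam.le (sub_nonneg.2 (hlb K))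
  have hrate : -(‖gf K‖ ^ 2 + inner ℝ (gf K) e)
      + (‖gf K‖ ^ 2 + 2 * inner ℝ (gf K) e + ‖e‖ ^ 2) / 8
      ≤ -(lam * (f K - fstar) / 8) := by
    linarith [hPL K]
  have := mul_le_mul_of_nonneg_left hrate hη0.le
  linarith
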